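/- Let N ≥ 1 be an integer and let w : closure(D⁺) → ℝ^N be a C¹ map vanishing on the arc ∂^A (i.e. w(x) = 0 whenever |x| = 1, x₂ ≥ 0). Then the weighted boundary trace integral along the chord satisfies ∫_{−1}^{1} |w(x₁, 0)|² / (1 − |x₁|) dx₁ ≤ 4 ∫_{D⁺} |∇w|² dx. (Boundary Hardy-type trace estimate, established in the proof of the energy convexity Theorem 2.2.) -/

import Mathlib

open MeasureTheory

/-- The open upper half unit disk `D⁺ = {x ∈ ℝ² : |x| < 1, x₂ > 0}`. -/
def halfDisk : Set (EuclideanSpace ℝ (Fin 2)) := {x | ‖x‖ < 1 ∧ 0 < x 1}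

/-- `|∇w|²(x)`: the sum of the squared norms of the partial derivatives of `w` at `x`. -/
noncomputable def gradSq {N : ℕ} (w : EuclideanSpace ℝ (Fin 2) → EuclideanSpace ℝ (Fin N))
    (x : EuclideanSpace ℝ (Fin 2)) : ℝ :=
  ∑ i : Fin 2, ‖fderiv ℝ w x (EuclideanSpace.single i (1 : ℝ))‖ ^ 2

lemma hd_isOpen : IsOpen halfDisk := by
  have h1 : IsOpen {x : EuclideanSpace ℝ (Fin 2) | ‖x‖ < 1} :=
    isOpen_lt continuous_norm continuous_const
  have h2 : IsOpen {x : EuclideanSpace ℝ (Fin 2) | 0 < x 1} :=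
    isOpen_lt continuous_const (by fun_prop)
  exact h1.inter h2

lemma hd_convex : Convex ℝ halfDisk := by
  intro x hx y hy a b ha hb hab
  have h1 : Convex ℝ (Metric.ball (0 : EuclideanSpace ℝ (Fin 2)) 1) := convex_ball _ _
  refine ⟨?_, ?_⟩
  · have := h1 (by simpa using hx.1) (by simpa using hy.1) ha hb hab
    simpa using this
  · have hx2 := hx.2
    have hy2 := hy.2
    simp only [PiLp.add_apply, PiLp.smul_apply, smul_eq_mul]
    rcases ha.eq_or_lt with h | h
    · have : b = 1 := by linarith
      subst h; subst this; simpa using hy2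
    · have := mul_pos h hx2
      have := mul_nonneg hb hy2.le
      linarith

lemma hd_mem (x y : ℝ) : (!₂[x, y] : EuclideanSpace ℝ (Fin 2)) ∈ halfDisk ↔
    x ^ 2 + y ^ 2 < 1 ∧ 0 < y := by
  simp [halfDisk, EuclideanSpace.norm_eq, Real.sqrt_lt' (zero_lt_one' ℝ)]

lemma hd_bound {N : ℕ} (w : EuclideanSpace ℝ (Fin 2) → EuclideanSpace ℝ (Fin N))
    (hw : ContDiffOn ℝ 1 w (closure halfDisk)) :
    ∃ M : ℝ, ∀ x ∈ halfDisk, ‖fderiv ℝ w x‖ ≤ M := by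
  have hne : (interior (closure halfDisk)).Nonempty := by
    refine ⟨!₂[0, 1/2], interior_mono subset_closure ?_⟩
    rw [hd_isOpen.interior_eq, hd_mem]; norm_num
  have hK : UniqueDiffOn ℝ (closure halfDisk) := uniqueDiffOn_convex hd_convex.closure hne
  have hc := hw.continuousOn_fderivWithin hK le_rfl
  have hcomp : IsCompact (closure halfDisk) := by
    apply Bornology.IsBounded.isCompact_closure
    refine (Metric.isBounded_ball (x := (0 : EuclideanSpace ℝ (Fin 2))) (r := 1)).subset ?_
    intro x hx
    simpa using hx.1
  obtain ⟨M, hM⟩ := hcomp.exists_bound_of_continuousOn hc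
  refine ⟨M, fun x hx => ?_⟩
  have := hM x (subset_closure hx)
  rwa [fderivWithin_of_mem_nhds (Filter.mem_of_superset (hd_isOpen.mem_nhds hx) subset_closure)]
    at this

lemma gradSq_nonneg' {N : ℕ} (w : EuclideanSpace ℝ (Fin 2) → EuclideanSpace ℝ (Fin N)) (x) :
    0 ≤ gradSq w x := Finset.sum_nonneg fun _ _ => by positivity

lemma gradSq_meas {N : ℕ} (w : EuclideanSpace ℝ (Fin 2) → EuclideanSpace ℝ (Fin N)) :
    Measurable (gradSq w) := by
  unfold gradSq
  exact Finset.measurable_sum _ fun i _ => ((measurable_fderiv_apply_const ℝ w _).norm.pow_const 2)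

lemma gradSq_le {N : ℕ} (w : EuclideanSpace ℝ (Fin 2) → EuclideanSpace ℝ (Fin N)) (x)
    (M : ℝ) (h : ‖fderiv ℝ w x‖ ≤ M) : gradSq w x ≤ 2 * M ^ 2 := by
  have : ∀ i : Fin 2, ‖fderiv ℝ w x (EuclideanSpace.single i (1 : ℝ))‖ ^ 2 ≤ M ^ 2 := by
    intro i
    have h1 := (fderiv ℝ w x).le_opNorm (EuclideanSpace.single i (1 : ℝ))
    simp only [EuclideanSpace.norm_single, norm_one, mul_one] at h1
    gcongr
    exact h1.trans h
  unfold gradSq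
  rw [Fin.sum_univ_two]
  linarith [this 0, this 1]

/-- Cauchy–Schwarz on an interval. -/
lemma cs_interval (g : ℝ → ℝ) (a : ℝ) (ha : 0 < a) (h1 : IntervalIntegrable g volume 0 a)
    (h2 : IntervalIntegrable (fun s => g s ^ 2) volume 0 a) :
    (∫ s in (0:ℝ)..a, g s) ^ 2 ≤ a * ∫ s in (0:ℝ)..a, g s ^ 2 := by
  set A := ∫ s in (0:ℝ)..a, g s
  set B := ∫ s in (0:ℝ)..a, g s ^ 2 with hB
  set c := A / a with hc
  have h0 : 0 ≤ ∫ s in (0:ℝ)..a, (g s - c) ^ 2 :=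
    intervalIntegral.integral_nonneg ha.le fun _ _ => sq_nonneg _
  have h3 : ∫ s in (0:ℝ)..a, (g s - c) ^ 2 = B - 2 * c * A + a * c ^ 2 := by
    have : (fun s => (g s - c) ^ 2) = fun s => (g s ^ 2 - 2 * c * g s) + c ^ 2 := by
      ext s; ring
    rw [this, intervalIntegral.integral_add (h2.sub (h1.const_mul _)) (by simp),
      intervalIntegral.integral_sub h2 (h1.const_mul _), intervalIntegral.integral_const_mul]
    simp [A, hB]
  have hca : c * a = A := by rw [hc]; field_simp
  rw [h3] at h0
  have := mul_nonneg ha.le h0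
  nlinarith

noncomputable def FF {N : ℕ} (w : EuclideanSpace ℝ (Fin 2) → EuclideanSpace ℝ (Fin N)) :
    EuclideanSpace ℝ (Fin 2) → ENNReal :=
  halfDisk.indicator fun x => ENNReal.ofReal (gradSq w x)

lemma FF_meas {N : ℕ} (w : EuclideanSpace ℝ (Fin 2) → EuclideanSpace ℝ (Fin N)) :
    Measurable (FF w) :=
  (gradSq_meas w).ennreal_ofReal.indicator hd_isOpen.measurableSet

lemma key {N : ℕ} (w : EuclideanSpace ℝ (Fin 2) → EuclideanSpace ℝ (Fin N))
    (hw : ContDiffOn ℝ 1 w (closure halfDisk))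
    (hbd : ∀ x : EuclideanSpace ℝ (Fin 2), ‖x‖ = 1 → 0 ≤ x 1 → w x = 0)
    (e t : ℝ) (he : e ^ 2 = 1) (ht0 : 0 ≤ e * t) (ht1 : e * t < 1) :
    ENNReal.ofReal (‖w !₂[t, 0]‖ ^ 2 / (1 - e * t)) ≤
      2 * ∫⁻ s : ℝ, FF w !₂[t + e * s, s] := by
  obtain ⟨M, hM⟩ := hd_bound w hw
  set r := e * t with hr
  have hrt : r ^ 2 = t ^ 2 := by rw [hr, mul_pow, he, one_mul]
  set q := Real.sqrt (2 - r ^ 2) with hq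
  have hr2 : r ^ 2 < 1 := by nlinarith
  have hq2 : q ^ 2 = 2 - r ^ 2 := Real.sq_sqrt (by linarith)
  have hq0 : 0 ≤ q := Real.sqrt_nonneg _
  set a := (q - r) / 2 with ha
  have hqr : r < q := by nlinarith
  have ha0 : 0 < a := by rw [ha]; linarith
  have hale : a ≤ 1 - r := by
    have : q ≤ 2 - r := by
      apply le_of_sq_le_sq _ (by linarith)
      nlinarith [sq_nonneg (r - 1)]
    rw [ha]; linarith
  have hpoly : ∀ s, (t + e * s) ^ 2 + s ^ 2 = 1 + 2 * (s - a) * (s + a + r) := by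
    intro s
    have h1 : (t + e * s) ^ 2 + s ^ 2 = r ^ 2 + 2 * r * s + 2 * s ^ 2 := by
      rw [hrt, hr]; linear_combination s ^ 2 * he
    rw [h1, ha]; linear_combination (1/2) * hq2
  set γ : ℝ → EuclideanSpace ℝ (Fin 2) := fun s => !₂[t + e * s, s] with hγ
  set v : EuclideanSpace ℝ (Fin 2) :=
    e • EuclideanSpace.single 0 (1 : ℝ) + EuclideanSpace.single 1 (1 : ℝ) with hv
  have hγeq : γ = fun s => !₂[t, 0] + s • v := by
    ext s i
    fin_cases i <;> simp [hγ, hv, mul_comm]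
  have hγd : ∀ s, HasDerivAt γ v s := by
    intro s
    rw [hγeq]
    simpa using ((hasDerivAt_id s).smul_const v).const_add (!₂[t, 0] : EuclideanSpace ℝ (Fin 2))
  have hγc : Continuous γ := continuous_iff_continuousAt.2 fun s => (hγd s).continuousAt
  have hmem : Set.MapsTo γ (Set.Ioo 0 a) halfDisk := by
    intro s hs
    rw [hγ]
    refine (hd_mem _ _).2 ⟨?_, hs.1⟩
    rw [hpoly]
    nlinarith [mul_pos (sub_pos.2 hs.2) (show 0 < s + a + r by linarith [hs.1])]
  have hmemc : Set.MapsTo γ (Set.Icc 0 a) (closure halfDisk) := by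
    have := hmem.closure hγc
    rwa [closure_Ioo ha0.ne] at this
  have hcont : ContinuousOn (w ∘ γ) (Set.Icc 0 a) := hw.continuousOn.comp hγc.continuousOn hmemc
  have hderiv : ∀ s ∈ Set.Ioo 0 a, HasDerivAt (w ∘ γ) (fderiv ℝ w (γ s) v) s := by
    intro s hs
    have hd : DifferentiableAt ℝ w (γ s) :=
      (hw.differentiableOn one_ne_zero).differentiableAt
        (Filter.mem_of_superset (hd_isOpen.mem_nhds (hmem hs)) subset_closure)
    exact hd.hasFDerivAt.comp_hasDerivAt s (hγd s)
  have hmeas : Measurable fun s => fderiv ℝ w (γ s) v :=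
    (measurable_fderiv_apply_const ℝ w v).comp hγc.measurable
  have hle : ∀ s ∈ Set.Ioo 0 a, ‖fderiv ℝ w (γ s) v‖ ≤ M * ‖v‖ := fun s hs =>
    ((fderiv ℝ w (γ s)).le_opNorm v).trans (by gcongr; exact hM _ (hmem hs))
  have hint : IntervalIntegrable (fun s => fderiv ℝ w (γ s) v) volume 0 a := by
    rw [intervalIntegrable_iff_integrableOn_Ioo_of_le ha0.le]
    exact Measure.integrableOn_of_bounded (by simp) hmeas.aestronglyMeasurable
      ((ae_restrict_iff' measurableSet_Ioo).2 (.of_forall hle))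
  have hint2 : IntervalIntegrable (fun s => ‖fderiv ℝ w (γ s) v‖ ^ 2) volume 0 a := by
    rw [intervalIntegrable_iff_integrableOn_Ioo_of_le ha0.le]
    refine Measure.integrableOn_of_bounded (M := (M * ‖v‖) ^ 2) (by simp)
      (hmeas.norm.pow_const 2).aestronglyMeasurable
      ((ae_restrict_iff' measurableSet_Ioo).2 (.of_forall fun s hs => ?_))
    have := hle s hs
    rw [Real.norm_of_nonneg (by positivity)]
    gcongr
  have hint3 : IntervalIntegrable (fun s => 2 * gradSq w (γ s)) volume 0 a := by
    rw [intervalIntegrable_iff_integrableOn_Ioo_of_le ha0.le]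
    refine Measure.integrableOn_of_bounded (M := 2 * (2 * M ^ 2)) (by simp)
      (((gradSq_meas w).comp hγc.measurable).const_mul 2).aestronglyMeasurable
      ((ae_restrict_iff' measurableSet_Ioo).2 (.of_forall fun s hs => ?_))
    have h1 := gradSq_le w _ M (hM _ (hmem hs))
    have h2 := gradSq_nonneg' w (γ s)
    rw [Real.norm_of_nonneg (by positivity)]
    linarith
  have hFTC := intervalIntegral.integral_eq_sub_of_hasDerivAt_of_le ha0.le hcont hderiv hint
  have hwa : w (γ a) = 0 := by
    apply hbd
    · have := hpoly a
      simp only [sub_self, mul_zero, zero_mul, add_zero] at this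
      simp [hγ, EuclideanSpace.norm_eq, this]
    · simpa [hγ] using ha0.le
  have hw0 : γ 0 = !₂[t, 0] := by simp [hγ]
  simp only [Function.comp, hwa, hw0, zero_sub] at hFTC
  have hN : ‖w !₂[t, 0]‖ ≤ ∫ s in (0:ℝ)..a, ‖fderiv ℝ w (γ s) v‖ := by
    rw [← norm_neg, ← hFTC]
    exact intervalIntegral.norm_integral_le_integral_norm ha0.le
  have hCS := cs_interval _ a ha0 hint.norm hint2
  have hpt : ∀ s, ‖fderiv ℝ w (γ s) v‖ ^ 2 ≤ 2 * gradSq w (γ s) := by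
    intro s
    have hee : |e| = 1 := by
      rw [← sq_abs] at he
      nlinarith [abs_nonneg e]
    have h1 : ‖fderiv ℝ w (γ s) v‖ ≤ ‖fderiv ℝ w (γ s) (EuclideanSpace.single 0 (1 : ℝ))‖ +
        ‖fderiv ℝ w (γ s) (EuclideanSpace.single 1 (1 : ℝ))‖ := by
      rw [hv, map_add, map_smul]
      refine (norm_add_le _ _).trans ?_
      rw [norm_smul, Real.norm_eq_abs, hee, one_mul]
    unfold gradSq
    rw [Fin.sum_univ_two]
    have h2 := pow_le_pow_left₀ (norm_nonneg _) h1 2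
    nlinarith [sq_nonneg (‖fderiv ℝ w (γ s) (EuclideanSpace.single 0 (1 : ℝ))‖ -
        ‖fderiv ℝ w (γ s) (EuclideanSpace.single 1 (1 : ℝ))‖)]
  have hmono := intervalIntegral.integral_mono_on ha0.le hint2 hint3 fun s _ => hpt s
  have hmain : ‖w !₂[t, 0]‖ ^ 2 / (1 - r) ≤ ∫ s in (0:ℝ)..a, 2 * gradSq w (γ s) := by
    rw [div_le_iff₀ (by linarith)]
    have h1 := pow_le_pow_left₀ (norm_nonneg _) hN 2
    have h2 : 0 ≤ ∫ s in (0:ℝ)..a, 2 * gradSq w (γ s) :=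
      intervalIntegral.integral_nonneg ha0.le fun s _ =>
        mul_nonneg zero_le_two (gradSq_nonneg' w _)
    calc _ ≤ _ := h1
      _ ≤ _ := hCS
      _ ≤ a * ∫ s in (0:ℝ)..a, 2 * gradSq w (γ s) := by gcongr
      _ ≤ (1 - r) * ∫ s in (0:ℝ)..a, 2 * gradSq w (γ s) := by gcongr
      _ = _ := mul_comm _ _
  refine (ENNReal.ofReal_le_ofReal hmain).trans ?_
  rw [intervalIntegral.integral_of_le ha0.le, integral_Ioc_eq_integral_Ioo,
    ofReal_integral_eq_lintegral_ofReal
      ((intervalIntegrable_iff_integrableOn_Ioo_of_le ha0.le).1 hint3)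
      (.of_forall fun s => mul_nonneg zero_le_two (gradSq_nonneg' w _))]
  rw [← lintegral_const_mul' _ _ (by simp), ← lintegral_indicator measurableSet_Ioo]
  refine lintegral_mono fun s => ?_
  by_cases hs : s ∈ Set.Ioo 0 a
  · rw [Set.indicator_of_mem hs]
    have : FF w (γ s) = ENNReal.ofReal (gradSq w (γ s)) := Set.indicator_of_mem (hmem hs) _
    change _ ≤ 2 * FF w (γ s)
    rw [this, ENNReal.ofReal_mul zero_le_two]
    simp
  · rw [Set.indicator_of_notMem hs]; exact zero_le

lemma shear (F : EuclideanSpace ℝ (Fin 2) → ENNReal) (hF : Measurable F) (e : ℝ) :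
    ∫⁻ t : ℝ, ∫⁻ s : ℝ, F !₂[t + e * s, s] = ∫⁻ x, F x := by
  have hm : Measurable fun p : ℝ × ℝ => (!₂[p.1 + e * p.2, p.2] : EuclideanSpace ℝ (Fin 2)) := by
    apply Continuous.measurable; fun_prop
  have hm2 : Measurable fun p : ℝ × ℝ => (!₂[p.1, p.2] : EuclideanSpace ℝ (Fin 2)) := by
    apply Continuous.measurable; fun_prop
  rw [lintegral_lintegral_swap (f := fun t s : ℝ => F !₂[t + e * s, s]) (hF.comp hm).aemeasurable]
  have h1 : ∀ s : ℝ, ∫⁻ t : ℝ, F !₂[t + e * s, s] = ∫⁻ t : ℝ, F !₂[t, s] := fun s =>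
    lintegral_add_right_eq_self (fun t => F !₂[t, s]) (e * s)
  simp_rw [h1]
  rw [← lintegral_lintegral_swap (f := fun t s : ℝ => F !₂[t, s]) (hF.comp hm2).aemeasurable]
  have h2 : MeasurePreserving (fun p : ℝ × ℝ => (!₂[p.1, p.2] : EuclideanSpace ℝ (Fin 2))) := by
    exact (PiLp.volume_preserving_toLp (Fin 2)).comp
      ((volume_preserving_finTwoArrow ℝ).symm _)
  rw [← h2.lintegral_comp hF, Measure.volume_eq_prod]
  exact (lintegral_prod _ (hF.comp hm2).aemeasurable).symm

/-- Boundary Hardy-type trace estimate: if `w` is `C¹` on the closed upper half disk and vanishes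
on the arc `∂^A`, then `∫_{−1}^{1} |w(x₁,0)|²/(1 − |x₁|) dx₁ ≤ 4 ∫_{D⁺} |∇w|²`. -/
theorem stmt_1 (N : ℕ) (hN : 1 ≤ N)
    (w : EuclideanSpace ℝ (Fin 2) → EuclideanSpace ℝ (Fin N))
    (hw : ContDiffOn ℝ 1 w (closure halfDisk))
    (hbd : ∀ x : EuclideanSpace ℝ (Fin 2), ‖x‖ = 1 → 0 ≤ x 1 → w x = 0) :
    (∫ t in (-1 : ℝ)..1, ‖w ((WithLp.equiv 2 (Fin 2 → ℝ)).symm ![t, 0])‖ ^ 2 / (1 - |t|)) ≤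
      4 * ∫ x in halfDisk, gradSq w x := by
  change (∫ t in (-1 : ℝ)..1, ‖w !₂[t, 0]‖ ^ 2 / (1 - |t|)) ≤ _
  obtain ⟨M, hM⟩ := hd_bound w hw
  have hR0 : 0 ≤ ∫ x in halfDisk, gradSq w x := integral_nonneg (gradSq_nonneg' w)
  rw [intervalIntegral.integral_of_le (by norm_num), integral_Ioc_eq_integral_Ioo]
  by_cases hi : IntegrableOn (fun t : ℝ => ‖w !₂[t, 0]‖ ^ 2 / (1 - |t|)) (Set.Ioo (-1) 1)
  swap
  · rw [integral_undef hi]; positivity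
  have hfin : volume halfDisk ≠ ⊤ := by
    refine ((measure_mono (t := Metric.ball (0 : EuclideanSpace ℝ (Fin 2)) 1) ?_).trans_lt
      measure_ball_lt_top).ne
    intro x hx
    simpa using hx.1
  have hgi : IntegrableOn (gradSq w) halfDisk := by
    refine Measure.integrableOn_of_bounded (M := 2 * M ^ 2) hfin
      (gradSq_meas w).aestronglyMeasurable
      ((ae_restrict_iff' hd_isOpen.measurableSet).2 (.of_forall fun x hx => ?_))
    rw [Real.norm_of_nonneg (gradSq_nonneg' w x)]
    exact gradSq_le w x M (hM x hx)
  rw [← ENNReal.ofReal_le_ofReal_iff (by positivity), ENNReal.ofReal_mul (by norm_num),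
    ofReal_integral_eq_lintegral_ofReal hgi (.of_forall (gradSq_nonneg' w)),
    ofReal_integral_eq_lintegral_ofReal hi
      ((ae_restrict_iff' measurableSet_Ioo).2 (.of_forall fun t ht => ?_))]
  swap
  · have : |t| < 1 := abs_lt.2 ht
    exact div_nonneg (by positivity) (by linarith)
  have hF : ∫⁻ x in halfDisk, ENNReal.ofReal (gradSq w x) = ∫⁻ x, FF w x :=
    (lintegral_indicator hd_isOpen.measurableSet _).symm
  rw [hF]
  have hmI : ∀ e : ℝ, Measurable fun t : ℝ => ∫⁻ s : ℝ, FF w !₂[t + e * s, s] := by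
    intro e
    have hm : Measurable fun p : ℝ × ℝ =>
        (!₂[p.1 + e * p.2, p.2] : EuclideanSpace ℝ (Fin 2)) := by
      apply Continuous.measurable; fun_prop
    exact ((FF_meas w).comp hm).lintegral_prod_right'
  calc _ ≤ ∫⁻ t in Set.Ioo (-1 : ℝ) 1, (2 * (∫⁻ s : ℝ, FF w !₂[t + 1 * s, s]) +
        2 * ∫⁻ s : ℝ, FF w !₂[t + (-1) * s, s]) := by
        refine setLIntegral_mono' measurableSet_Ioo fun t ht => ?_
        rcases le_total 0 t with h | h
        · rw [abs_of_nonneg h]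
          have := key w hw hbd 1 t (by norm_num) (by linarith) (by linarith [ht.2])
          rw [one_mul] at this
          exact this.trans le_self_add
        · rw [abs_of_nonpos h]
          have := key w hw hbd (-1) t (by norm_num) (by linarith) (by linarith [ht.1])
          rw [neg_one_mul] at this
          exact this.trans le_add_self
    _ ≤ ∫⁻ t : ℝ, (2 * (∫⁻ s : ℝ, FF w !₂[t + 1 * s, s]) +
        2 * ∫⁻ s : ℝ, FF w !₂[t + (-1) * s, s]) := setLIntegral_le_lintegral _ _
    _ = 2 * (∫⁻ x, FF w x) + 2 * ∫⁻ x, FF w x := by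
        rw [lintegral_add_left ((hmI 1).const_mul 2), lintegral_const_mul _ (hmI 1),
          lintegral_const_mul _ (hmI (-1)), shear _ (FF_meas w), shear _ (FF_meas w)]
    _ = _ := by
        rw [← add_mul]; norm_num
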